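/- Consider an angle system on the tetrahedron: six angles α_{ij} = α_{ji} ∈ (0,π) on the edges {i,j} ⊂ {1,2,3,4} such that at each vertex the link triple is spherical, and for each edge {i,j} let c_{ij} denote the cosh-length of {i,j} computed in a face containing it (independent of the face). Then all six values c_{ij} lie in the same one of the following three classes: all in the open interval (−1,1) (spherical type); all in {−1, 1} (Euclidean type); or all in (−∞,−1) ∪ (1,∞) (hyperbolic type). -/

import Mathlib

/-!
Up to a positive factor, `1 - coshLen c a b ^ 2` is the determinant of the Gram matrix of the side
normals of a triangle with angles `a`, `b`, `c`. Applied to the link of a vertex, where that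
determinant is positive, this shows that the face angles are genuine angles. Applied to a face, it
gives the sign of `1 - c ^ 2` for each cosh-length `c` in terms of the `3 × 3` determinant of the
face. Eliminating the row and column of that face from the `4 × 4` Gram matrix of the tetrahedron
leaves, by the spherical law of cosines in the vertex links, the Gram matrix of the face with rows
and columns rescaled by positive factors, so both determinants have the same sign. The `4 × 4`
determinant is invariant under relabelling the vertices, so it decides the type of all six edges at
once.
-/

open Real

/-- `coshLen a b c` is the quantity (cos a + cos b · cos c)/(sin b · sin c), the cosine
(or hyperbolic cosine) of the generalized length of the edge opposite the angle `a` in a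
Möbius triangle with angles `a`, `b`, `c`. -/
noncomputable def coshLen (a b c : ℝ) : ℝ :=
  (Real.cos a + Real.cos b * Real.cos c) / (Real.sin b * Real.sin c)

/-- `(a,b,c)` are the angles of a spherical triangle: sum > π and triangle inequalities. -/
def IsSphericalTriple (a b c : ℝ) : Prop :=
  a + b + c > π ∧ b + c < a + π ∧ a + c < b + π ∧ a + b < c + π

/-- The Gram matrix of the outward unit side normals of a spherical, Euclidean or hyperbolic
triangle with angles `a`, `b`, `c`. -/
noncomputable def triangleGram (a b c : ℝ) : Matrix (Fin 3) (Fin 3) ℝ :=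
  !![1, -cos c, -cos b;
    -cos c, 1, -cos a;
    -cos b, -cos a, 1]

/-- The Gram matrix of the outward unit face normals of a tetrahedron, `α₁₂, …, α₃₄` being its
dihedral angles. Rows and columns are indexed by the faces, each face being numbered by its
opposite vertex; thus faces `1` and `2` meet along the edge `{3, 4}`. -/
noncomputable def tetrahedronGram (α₁₂ α₁₃ α₁₄ α₂₃ α₂₄ α₃₄ : ℝ) : Matrix (Fin 4) (Fin 4) ℝ :=
  !![1, -cos α₃₄, -cos α₂₄, -cos α₂₃;
    -cos α₃₄, 1, -cos α₁₄, -cos α₁₃;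
    -cos α₂₄, -cos α₁₄, 1, -cos α₁₂;
    -cos α₂₃, -cos α₁₃, -cos α₁₂, 1]

section Triangle

variable (a b c : ℝ)

lemma det_triangleGram :
    (triangleGram a b c).det =
      1 - cos a ^ 2 - cos b ^ 2 - cos c ^ 2 - 2 * cos a * cos b * cos c := by
  simp only [triangleGram, Matrix.det_fin_three, Matrix.of_apply, Matrix.cons_val]
  ring

lemma det_triangleGram_swap_right :
    (triangleGram a c b).det = (triangleGram a b c).det := by
  simp only [det_triangleGram]
  ring

lemma det_triangleGram_rotate :
    (triangleGram b c a).det = (triangleGram a b c).det := by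
  simp only [det_triangleGram]
  ring

lemma det_triangleGram_eq_prod :
    (triangleGram a b c).det =
      -(4 * cos ((c + (a + b)) / 2) * cos ((c - (a + b)) / 2) *
        cos ((c + (a - b)) / 2) * cos ((c - (a - b)) / 2)) :=
  calc
    (triangleGram a b c).det = (1 - cos a ^ 2) * (1 - cos b ^ 2) - (cos c + cos a * cos b) ^ 2 := by
      rw [det_triangleGram]; ring
    _ = -((cos c + cos (a + b)) * (cos c + cos (a - b))) := by
      rw [← sin_sq, ← sin_sq, cos_add, cos_sub]; ring
    _ = _ := by
      rw [cos_add_cos, cos_add_cos]; ring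

variable {a b c}

lemma one_sub_coshLen_sq (ha : sin a ≠ 0) (hb : sin b ≠ 0) :
    1 - coshLen c a b ^ 2 = (triangleGram a b c).det / (sin a * sin b) ^ 2 := by
  have hab : (sin a * sin b) ^ 2 = (1 - cos a ^ 2) * (1 - cos b ^ 2) := by
    rw [mul_pow, sin_sq, sin_sq]
  rw [coshLen, div_pow, one_sub_div (by positivity), hab, det_triangleGram]
  ring

lemma sign_one_sub_coshLen_sq (ha : sin a ≠ 0) (hb : sin b ≠ 0) :
    SignType.sign (1 - coshLen c a b ^ 2) = SignType.sign (triangleGram a b c).det := by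
  have hpos : 0 < ((sin a * sin b) ^ 2)⁻¹ := by positivity
  rw [one_sub_coshLen_sq ha hb, div_eq_mul_inv, sign_mul, sign_pos hpos, mul_one]

end Triangle

namespace IsSphericalTriple

variable {a b c : ℝ}

lemma swap_right (h : IsSphericalTriple a b c) : IsSphericalTriple a c b := by
  obtain ⟨hsum, ha, hb, hc⟩ := h
  refine ⟨?_, ?_, ?_, ?_⟩ <;> linarith

lemma rotate (h : IsSphericalTriple a b c) : IsSphericalTriple b c a := by
  obtain ⟨hsum, ha, hb, hc⟩ := h
  refine ⟨?_, ?_, ?_, ?_⟩ <;> linarith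

lemma sin_pos_left (h : IsSphericalTriple a b c) : 0 < sin a := by
  obtain ⟨hsum, ha, hb, hc⟩ := h
  exact sin_pos_of_pos_of_lt_pi (by linarith) (by linarith)

lemma det_triangleGram_pos (h : IsSphericalTriple a b c) : 0 < (triangleGram a b c).det := by
  obtain ⟨hsum, ha, hb, hc⟩ := h
  have hneg : cos ((c + (a + b)) / 2) < 0 :=
    cos_neg_of_pi_div_two_lt_of_lt (by linarith) (by linarith)
  have hpos₁ : 0 < cos ((c - (a + b)) / 2) := cos_pos_of_mem_Ioo ⟨by linarith, by linarith⟩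
  have hpos₂ : 0 < cos ((c + (a - b)) / 2) := cos_pos_of_mem_Ioo ⟨by linarith, by linarith⟩
  have hpos₃ : 0 < cos ((c - (a - b)) / 2) := cos_pos_of_mem_Ioo ⟨by linarith, by linarith⟩
  rw [det_triangleGram_eq_prod, neg_pos]
  exact mul_neg_of_neg_of_pos (mul_neg_of_neg_of_pos (mul_neg_of_neg_of_pos
    (mul_neg_of_pos_of_neg four_pos hneg) hpos₁) hpos₂) hpos₃

lemma coshLen_sq_lt_one (h : IsSphericalTriple a b c) : coshLen c a b ^ 2 < 1 := by
  rw [← sub_pos, one_sub_coshLen_sq h.sin_pos_left.ne' h.rotate.sin_pos_left.ne']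
  exact div_pos h.det_triangleGram_pos (pow_pos (mul_pos h.sin_pos_left h.rotate.sin_pos_left) 2)

lemma cos_arccos_coshLen (h : IsSphericalTriple a b c) :
    cos (arccos (coshLen c a b)) = coshLen c a b :=
  have hlt := abs_lt.1 ((sq_lt_one_iff_abs_lt_one _).1 h.coshLen_sq_lt_one)
  cos_arccos hlt.1.le hlt.2.le

lemma cos_arccos_coshLen_mul_sin_mul_sin (h : IsSphericalTriple a b c) :
    cos (arccos (coshLen c a b)) * (sin a * sin b) = cos c + cos a * cos b := by
  rw [h.cos_arccos_coshLen, coshLen,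
    div_mul_cancel₀ _ (mul_pos h.sin_pos_left h.rotate.sin_pos_left).ne']

lemma sin_arccos_coshLen_ne_zero (h : IsSphericalTriple a b c) :
    sin (arccos (coshLen c a b)) ≠ 0 := by
  rw [sin_arccos]
  exact (sqrt_pos.2 (sub_pos.2 h.coshLen_sq_lt_one)).ne'

end IsSphericalTriple

section Tetrahedron

variable (α₁₂ α₁₃ α₁₄ α₂₃ α₂₄ α₃₄ : ℝ)

lemma det_tetrahedronGram_swap₃₄ :
    (tetrahedronGram α₁₂ α₁₄ α₁₃ α₂₄ α₂₃ α₃₄).det =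
      (tetrahedronGram α₁₂ α₁₃ α₁₄ α₂₃ α₂₄ α₃₄).det := by
  rw [← Matrix.det_submatrix_equiv_self (Equiv.swap 2 3)]
  congr 1
  ext i j
  fin_cases i <;> fin_cases j <;> rfl

lemma det_tetrahedronGram_swap₂₃ :
    (tetrahedronGram α₁₃ α₁₂ α₁₄ α₂₃ α₃₄ α₂₄).det =
      (tetrahedronGram α₁₂ α₁₃ α₁₄ α₂₃ α₂₄ α₃₄).det := by
  rw [← Matrix.det_submatrix_equiv_self (Equiv.swap 1 2)]
  congr 1
  ext i j
  fin_cases i <;> fin_cases j <;> rfl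

lemma det_tetrahedronGram_eq_det_schurComplement :
    (tetrahedronGram α₁₂ α₁₃ α₁₄ α₂₃ α₂₄ α₃₄).det =
      (triangleGram α₁₄ α₂₄ α₃₄ -
        Matrix.vecMulVec ![cos α₂₃, cos α₁₃, cos α₁₂] ![cos α₂₃, cos α₁₃, cos α₁₂]).det := by
  have hblocks : (tetrahedronGram α₁₂ α₁₃ α₁₄ α₂₃ α₂₄ α₃₄).submatrix
      finSumFinEquiv finSumFinEquiv =
        Matrix.fromBlocks (triangleGram α₁₄ α₂₄ α₃₄)
          (-Matrix.replicateCol (Fin 1) ![cos α₂₃, cos α₁₃, cos α₁₂])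
          (-Matrix.replicateRow (Fin 1) ![cos α₂₃, cos α₁₃, cos α₁₂]) 1 := by
    ext (i | i) (j | j) <;> fin_cases i <;> fin_cases j <;> rfl
  rw [← Matrix.det_submatrix_equiv_self (finSumFinEquiv (m := 3) (n := 1)), hblocks,
    Matrix.det_fromBlocks_one₂₂, Matrix.neg_mul, Matrix.mul_neg, neg_neg,
    Matrix.vecMulVec_eq (Fin 1)]
  rfl

variable {α₁₂ α₁₃ α₁₄ α₂₃ α₂₄ α₃₄}

lemma schurComplement_eq_diagonal_mul_mul_diagonal (hv₁ : IsSphericalTriple α₁₂ α₁₃ α₁₄)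
    (hv₂ : IsSphericalTriple α₁₂ α₂₃ α₂₄) (hv₃ : IsSphericalTriple α₁₃ α₂₃ α₃₄) :
    triangleGram α₁₄ α₂₄ α₃₄ -
        Matrix.vecMulVec ![cos α₂₃, cos α₁₃, cos α₁₂] ![cos α₂₃, cos α₁₃, cos α₁₂] =
      Matrix.diagonal ![sin α₂₃, sin α₁₃, sin α₁₂] *
        triangleGram (arccos (coshLen α₁₄ α₁₂ α₁₃)) (arccos (coshLen α₂₄ α₁₂ α₂₃))
          (arccos (coshLen α₃₄ α₁₃ α₂₃)) *
        Matrix.diagonal ![sin α₂₃, sin α₁₃, sin α₁₂] := by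
  ext i j
  rw [Matrix.mul_diagonal, Matrix.diagonal_mul, Matrix.sub_apply, Matrix.vecMulVec_apply]
  fin_cases i <;> fin_cases j <;>
    simp only [triangleGram, Matrix.of_apply, Matrix.cons_val, Fin.isValue, Fin.zero_eta,
      Fin.mk_one, Fin.reduceFinMk] <;>
    linarith [hv₁.cos_arccos_coshLen_mul_sin_mul_sin, hv₂.cos_arccos_coshLen_mul_sin_mul_sin,
      hv₃.cos_arccos_coshLen_mul_sin_mul_sin, sin_sq_add_cos_sq α₁₂, sin_sq_add_cos_sq α₁₃,
      sin_sq_add_cos_sq α₂₃]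

lemma det_tetrahedronGram_eq_sq_mul_det_triangleGram (hv₁ : IsSphericalTriple α₁₂ α₁₃ α₁₄)
    (hv₂ : IsSphericalTriple α₁₂ α₂₃ α₂₄) (hv₃ : IsSphericalTriple α₁₃ α₂₃ α₃₄) :
    (tetrahedronGram α₁₂ α₁₃ α₁₄ α₂₃ α₂₄ α₃₄).det =
      (sin α₂₃ * sin α₁₃ * sin α₁₂) ^ 2 *
        (triangleGram (arccos (coshLen α₁₄ α₁₂ α₁₃)) (arccos (coshLen α₂₄ α₁₂ α₂₃))
          (arccos (coshLen α₃₄ α₁₃ α₂₃))).det := by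
  rw [det_tetrahedronGram_eq_det_schurComplement,
    schurComplement_eq_diagonal_mul_mul_diagonal hv₁ hv₂ hv₃, Matrix.det_mul,
    Matrix.det_mul, Matrix.det_diagonal, Fin.prod_univ_three]
  simp only [Matrix.cons_val]
  ring

lemma sign_det_triangleGram_faceAngles (hv₁ : IsSphericalTriple α₁₂ α₁₃ α₁₄)
    (hv₂ : IsSphericalTriple α₁₂ α₂₃ α₂₄) (hv₃ : IsSphericalTriple α₁₃ α₂₃ α₃₄) :
    SignType.sign (triangleGram (arccos (coshLen α₁₄ α₁₂ α₁₃)) (arccos (coshLen α₂₄ α₁₂ α₂₃))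
        (arccos (coshLen α₃₄ α₁₃ α₂₃))).det =
      SignType.sign (tetrahedronGram α₁₂ α₁₃ α₁₄ α₂₃ α₂₄ α₃₄).det := by
  have hpos : 0 < sin α₂₃ * sin α₁₃ * sin α₁₂ :=
    mul_pos (mul_pos hv₂.rotate.sin_pos_left hv₃.sin_pos_left) hv₁.sin_pos_left
  rw [det_tetrahedronGram_eq_sq_mul_det_triangleGram hv₁ hv₂ hv₃, sign_mul,
    sign_pos (pow_pos hpos 2), one_mul]

lemma sign_one_sub_edge_coshLen_sq (hv₁ : IsSphericalTriple α₁₂ α₁₃ α₁₄)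
    (hv₂ : IsSphericalTriple α₁₂ α₂₃ α₂₄) (hv₃ : IsSphericalTriple α₁₃ α₂₃ α₃₄) :
    let β₁ := arccos (coshLen α₁₄ α₁₂ α₁₃)
    let β₂ := arccos (coshLen α₂₄ α₁₂ α₂₃)
    let β₃ := arccos (coshLen α₃₄ α₁₃ α₂₃)
    let σ := SignType.sign (tetrahedronGram α₁₂ α₁₃ α₁₄ α₂₃ α₂₄ α₃₄).det
    SignType.sign (1 - coshLen β₃ β₁ β₂ ^ 2) = σ ∧
      SignType.sign (1 - coshLen β₂ β₁ β₃ ^ 2) = σ ∧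
      SignType.sign (1 - coshLen β₁ β₂ β₃ ^ 2) = σ := by
  intro β₁ β₂ β₃ σ
  have hβ₁ : sin β₁ ≠ 0 := hv₁.sin_arccos_coshLen_ne_zero
  have hβ₂ : sin β₂ ≠ 0 := hv₂.sin_arccos_coshLen_ne_zero
  have hβ₃ : sin β₃ ≠ 0 := hv₃.sin_arccos_coshLen_ne_zero
  have hface : SignType.sign (triangleGram β₁ β₂ β₃).det = σ :=
    sign_det_triangleGram_faceAngles hv₁ hv₂ hv₃
  refine ⟨?_, ?_, ?_⟩
  · rw [sign_one_sub_coshLen_sq hβ₁ hβ₂, hface]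
  · rw [sign_one_sub_coshLen_sq hβ₁ hβ₃, det_triangleGram_swap_right, hface]
  · rw [sign_one_sub_coshLen_sq hβ₂ hβ₃, det_triangleGram_rotate, hface]

end Tetrahedron

lemma same_type_of_sign_one_sub_sq_eq {s : Set ℝ} {σ : SignType}
    (h : ∀ c ∈ s, SignType.sign (1 - c ^ 2) = σ) :
    (∀ c ∈ s, c ∈ Set.Ioo (-1 : ℝ) 1) ∨ (∀ c ∈ s, c = -1 ∨ c = 1) ∨
      (∀ c ∈ s, c < -1 ∨ 1 < c) := by
  rcases σ with - | - | -
  · refine Or.inr (Or.inl fun c hc => ?_)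
    have hsq : c ^ 2 = 1 := (sub_eq_zero.1 (sign_eq_zero_iff.1 (h c hc))).symm
    exact (sq_eq_one_iff.1 hsq).symm
  · refine Or.inr (Or.inr fun c hc => ?_)
    have hsq : 1 < c ^ 2 := sub_neg.1 (sign_eq_neg_one_iff.1 (h c hc))
    exact (lt_abs.1 ((one_lt_sq_iff_one_lt_abs c).1 hsq)).symm.imp_left lt_neg_of_lt_neg
  · refine Or.inl fun c hc => ?_
    have hsq : c ^ 2 < 1 := sub_pos.1 (sign_eq_one_iff.1 (h c hc))
    exact abs_lt.1 ((sq_lt_one_iff_abs_lt_one c).1 hsq)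

/-- For an angle system (α_{ij}) on the tetrahedron, all six cosh-lengths
c_{ij} lie in the same class: all in (-1,1) (spherical type), or all in {-1,1}
(Euclidean type), or all in (-∞,-1) ∪ (1,∞) (hyperbolic type).  The face angle
β^i_{jk} is arccos (coshLen α_{il} α_{ij} α_{ik}) (l the fourth vertex), and the
cosh-length of the edge {i,j} is coshLen β^k_{ij} β^i_{jk} β^j_{ik}, computed in
either face {i,j,k} containing {i,j}. -/
theorem edge_lengths_same_type
    (α₁₂ α₁₃ α₁₄ α₂₃ α₂₄ α₃₄ : ℝ)
    (h₁₂ : α₁₂ ∈ Set.Ioo 0 π) (h₁₃ : α₁₃ ∈ Set.Ioo 0 π) (h₁₄ : α₁₄ ∈ Set.Ioo 0 π)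
    (h₂₃ : α₂₃ ∈ Set.Ioo 0 π) (h₂₄ : α₂₄ ∈ Set.Ioo 0 π) (h₃₄ : α₃₄ ∈ Set.Ioo 0 π)
    (hv₁ : IsSphericalTriple α₁₂ α₁₃ α₁₄)
    (hv₂ : IsSphericalTriple α₁₂ α₂₃ α₂₄)
    (hv₃ : IsSphericalTriple α₁₃ α₂₃ α₃₄)
    (hv₄ : IsSphericalTriple α₁₄ α₂₄ α₃₄) :
    let β₁₂₃ := Real.arccos (coshLen α₁₄ α₁₂ α₁₃)
    let β₂₁₃ := Real.arccos (coshLen α₂₄ α₁₂ α₂₃)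
    let β₃₁₂ := Real.arccos (coshLen α₃₄ α₁₃ α₂₃)
    let β₁₂₄ := Real.arccos (coshLen α₁₃ α₁₂ α₁₄)
    let β₂₁₄ := Real.arccos (coshLen α₂₃ α₁₂ α₂₄)
    let β₄₁₂ := Real.arccos (coshLen α₃₄ α₁₄ α₂₄)
    let β₁₃₄ := Real.arccos (coshLen α₁₂ α₁₃ α₁₄)
    let β₃₁₄ := Real.arccos (coshLen α₂₃ α₁₃ α₃₄)
    let β₄₁₃ := Real.arccos (coshLen α₂₄ α₁₄ α₃₄)
    let c₁₂ := coshLen β₃₁₂ β₁₂₃ β₂₁₃   -- edge {1,2}, computed in face {1,2,3}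
    let c₁₃ := coshLen β₂₁₃ β₁₂₃ β₃₁₂   -- edge {1,3}, computed in face {1,2,3}
    let c₂₃ := coshLen β₁₂₃ β₂₁₃ β₃₁₂   -- edge {2,3}, computed in face {1,2,3}
    let c₁₄ := coshLen β₂₁₄ β₁₂₄ β₄₁₂   -- edge {1,4}, computed in face {1,2,4}
    let c₂₄ := coshLen β₁₂₄ β₂₁₄ β₄₁₂   -- edge {2,4}, computed in face {1,2,4}
    let c₃₄ := coshLen β₁₃₄ β₃₁₄ β₄₁₃   -- edge {3,4}, computed in face {1,3,4}
    let cs : List ℝ := [c₁₂, c₁₃, c₁₄, c₂₃, c₂₄, c₃₄]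
    (∀ c ∈ cs, c ∈ Set.Ioo (-1 : ℝ) 1) ∨
    (∀ c ∈ cs, c = -1 ∨ c = 1) ∨
    (∀ c ∈ cs, c < -1 ∨ 1 < c) := by
  intro β₁₂₃ β₂₁₃ β₃₁₂ β₁₂₄ β₂₁₄ β₄₁₂ β₁₃₄ β₃₁₄ β₄₁₃ c₁₂ c₁₃ c₂₃ c₁₄ c₂₄ c₃₄ cs
  have face₁₂₃ := sign_one_sub_edge_coshLen_sq hv₁ hv₂ hv₃
  have face₁₂₄ := sign_one_sub_edge_coshLen_sq hv₁.swap_right hv₂.swap_right hv₄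
  have face₁₃₄ := sign_one_sub_edge_coshLen_sq hv₁.rotate hv₃.swap_right hv₄.swap_right
  rw [det_tetrahedronGram_swap₃₄] at face₁₂₄
  rw [det_tetrahedronGram_swap₃₄, det_tetrahedronGram_swap₂₃] at face₁₃₄
  obtain ⟨hc₁₂, hc₁₃, hc₂₃⟩ := face₁₂₃
  obtain ⟨-, hc₁₄, hc₂₄⟩ := face₁₂₄
  obtain ⟨-, -, hc₃₄⟩ := face₁₃₄
  have hsign : ∀ c ∈ cs, SignType.sign (1 - c ^ 2) =
      SignType.sign (tetrahedronGram α₁₂ α₁₃ α₁₄ α₂₃ α₂₄ α₃₄).det := by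
    simp only [cs, List.forall_mem_cons]
    exact ⟨hc₁₂, hc₁₃, hc₁₄, hc₂₃, hc₂₄, hc₃₄, List.forall_mem_nil _⟩
  exact same_type_of_sign_one_sub_sq_eq (s := {c | c ∈ cs}) hsign
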